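/- For p, q ∈ ℕ let d_{p,q} denote the number of B-diagrams G with ω(G) = p and h_f↑(G) = q (this number is finite). Then d_{0,0} = 1, d_{0,q} = 0 for q > 0, and for every p ≥ 1 and q ≥ 0: d_{p,q} = Σ_{i=1}^{p} Σ_{j=0}^{i} Σ_{k=0}^{i} Σ_{ℓ=0}^{j} ℓ!·C(j,ℓ)·C(q−k+ℓ, ℓ)·C(i,j)·C(i,k)·d_{p−i, q−k+ℓ}, where C(·,·) denotes the binomial coefficient and all terms with k > q + ℓ are understood to vanish. -/

import Mathlib

open scoped BigOperators

structure BD where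
  lam : List ℕ
  up : Finset ℕ
  dn : Finset ℕ
  ed : Finset (ℕ × ℕ)
deriving DecidableEq

namespace BD

/-- number of vertices -/
def nv (G : BD) : ℕ := G.lam.length

/-- number of half-edges -/
def omega (G : BD) : ℕ := G.lam.sum

/-- the vertex to which a half-edge belongs -/
def v (G : BD) (k : ℕ) : ℕ :=
  (List.range G.lam.length).countP (fun i => (G.lam.take i).sum < k)

def Valid (G : BD) : Prop :=
  (∀ x ∈ G.lam, 0 < x) ∧
  G.up ⊆ Finset.Icc 1 G.omega ∧
  G.dn ⊆ Finset.Icc 1 G.omega ∧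
  (∀ p ∈ G.ed, p.1 ∈ G.up ∧ p.2 ∈ G.dn ∧ G.v p.1 < G.v p.2) ∧
  (∀ p ∈ G.ed, ∀ q ∈ G.ed, p.1 = q.1 → p = q) ∧
  (∀ p ∈ G.ed, ∀ q ∈ G.ed, p.2 = q.2 → p = q)

def eps : BD := ⟨[], ∅, ∅, ∅⟩

theorem eps_valid : eps.Valid := by
  refine ⟨?_, ?_, ?_, ?_, ?_, ?_⟩ <;> simp [eps, Valid, omega]

def HfUp (G : BD) : Finset ℕ := G.up \ G.ed.image Prod.fst
def HfDn (G : BD) : Finset ℕ := G.dn \ G.ed.image Prod.snd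
def hfUp (G : BD) : ℕ := G.HfUp.card
def hfDn (G : BD) : ℕ := G.HfDn.card
def hc (G : BD) : ℕ :=
  (G.omega - G.ed.card - G.hfUp) + (G.omega - G.ed.card - G.hfDn)

/-- composition of `G'` over `G` along a matching `s` -/
def comp (G G' : BD) (s : Finset (ℕ × ℕ)) : BD where
  lam := G.lam ++ G'.lam
  up := G.up ∪ G'.up.image (· + G.omega)
  dn := G.dn ∪ G'.dn.image (· + G.omega)
  ed := G.ed ∪ s.image (fun p => (p.1, p.2 + G.omega)) ∪
        G'.ed.image (fun p => (p.1 + G.omega, p.2 + G.omega))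

/-- `s` encodes a strictly increasing sequence `a₁ < ⋯ < a_k` of elements of `H_f↑(G)`
matched with pairwise distinct elements `b₁,…,b_k` of `H_f↓(G')`. -/
def Matching (G G' : BD) (s : Finset (ℕ × ℕ)) : Prop :=
  (∀ p ∈ s, p.1 ∈ G.HfUp ∧ p.2 ∈ G'.HfDn) ∧
  (∀ p ∈ s, ∀ q ∈ s, p.1 = q.1 → p = q) ∧
  (∀ p ∈ s, ∀ q ∈ s, p.2 = q.2 → p = q)

open scoped Classical in
noncomputable def matchings (G G' : BD) : Finset (Finset (ℕ × ℕ)) :=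
  (G.HfUp ×ˢ G'.HfDn).powerset.filter (fun s => Matching G G' s)

/-- juxtaposition -/
def juxt (G G' : BD) : BD := comp G G' ∅

def Indiv (G : BD) : Prop :=
  ∀ G₁ G₂ : BD, G₁.Valid → G₂.Valid → G = juxt G₁ G₂ → G₁ = G ∨ G₂ = G

/-- half-edges attached to the vertices in `I` -/
def HI (G : BD) (I : Finset ℕ) : Finset ℕ :=
  (Finset.Icc 1 G.omega).filter (fun k => G.v k ∈ I)

/-- the increasing relabelling bijection -/
def phi (G : BD) (I : Finset ℕ) (k : ℕ) : ℕ := ((G.HI I).filter (· ≤ k)).card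

/-- sub-B-diagram on the set of vertices `I` -/
def sub (G : BD) (I : Finset ℕ) : BD where
  lam := ((List.range G.lam.length).filter (fun i => i + 1 ∈ I)).map (fun i => G.lam.getD i 0)
  up := (G.up ∩ G.HI I).image (G.phi I)
  dn := (G.dn ∩ G.HI I).image (G.phi I)
  ed := (G.ed.filter (fun p => G.v p.1 ∈ I ∧ G.v p.2 ∈ I)).image
          (fun p => (G.phi I p.1, G.phi I p.2))

def Isolated (G : BD) (I : Finset ℕ) : Prop :=
  ∀ p ∈ G.ed, (G.v p.1 ∈ I ↔ G.v p.2 ∈ I)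

def Connected (G : BD) : Prop :=
  ∀ i j : ℕ, 1 ≤ i → i < j → j ≤ G.nv →
    ∃ (k : ℕ) (c : Fin (k + 1) → ℕ × ℕ),
      (∀ ℓ, c ℓ ∈ G.ed) ∧
      (i = G.v (c 0).1 ∨ i = G.v (c 0).2) ∧
      (j = G.v (c (Fin.last k)).1 ∨ j = G.v (c (Fin.last k)).2) ∧
      ∀ ℓ : Fin k,
        G.v (c ℓ.castSucc).1 = G.v (c ℓ.succ).1 ∨ G.v (c ℓ.castSucc).1 = G.v (c ℓ.succ).2 ∨
        G.v (c ℓ.castSucc).2 = G.v (c ℓ.succ).1 ∨ G.v (c ℓ.castSucc).2 = G.v (c ℓ.succ).2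

def IsConnComp (G : BD) (I : Finset ℕ) : Prop :=
  I ⊆ Finset.Icc 1 G.nv ∧ I.Nonempty ∧ (G.sub I).Connected ∧
  ∀ J : Finset ℕ, I ⊆ J → J ⊆ Finset.Icc 1 G.nv → (G.sub J).Connected → J = I

end BD

/-- `d p q` is the number of B-diagrams `G` with `ω(G) = p` and `h_f↑(G) = q`. -/
noncomputable def dBD (p q : ℕ) : ℕ :=
  Set.ncard {G : BD | G.Valid ∧ G.omega = p ∧ G.hfUp = q}

namespace BDAux

open Finset

/-- matchings of size `l` between `X` and `Y` -/
def mt (X Y : Finset ℕ) (l : ℕ) : Finset (Finset (ℕ × ℕ)) :=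
  (X ×ˢ Y).powerset.filter (fun s =>
    ((∀ p ∈ s, ∀ q ∈ s, p.1 = q.1 → p = q) ∧ (∀ p ∈ s, ∀ q ∈ s, p.2 = q.2 → p = q)) ∧ s.card = l)

theorem mem_mt {X Y : Finset ℕ} {l : ℕ} {s : Finset (ℕ × ℕ)} :
    s ∈ mt X Y l ↔ (∀ p ∈ s, p.1 ∈ X ∧ p.2 ∈ Y) ∧
    (∀ p ∈ s, ∀ q ∈ s, p.1 = q.1 → p = q) ∧ (∀ p ∈ s, ∀ q ∈ s, p.2 = q.2 → p = q) ∧ s.card = l := by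
  unfold mt
  simp only [Finset.mem_filter, Finset.mem_powerset, Finset.subset_iff, Finset.mem_product, and_assoc]

theorem mt_zero (X Y : Finset ℕ) : (mt X Y 0).card = 1 := by
  have : mt X Y 0 = {∅} := by
    ext s
    rw [mem_mt, Finset.mem_singleton]
    constructor
    · rintro ⟨_, _, _, h⟩
      exact Finset.card_eq_zero.mp h
    · rintro rfl
      simp
  rw [this]; simp

theorem mt_empty (X : Finset ℕ) (l : ℕ) : (mt X ∅ (l+1)).card = 0 := by
  rw [Finset.card_eq_zero, Finset.eq_empty_iff_forall_notMem]
  intro s hs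
  rw [mem_mt] at hs
  obtain ⟨h1, _, _, h4⟩ := hs
  obtain ⟨p, hp⟩ : s.Nonempty := by rw [← Finset.card_pos]; omega
  exact absurd (h1 p hp).2 (by simp)

theorem mt_succ (X Y : Finset ℕ) (y : ℕ) (hy : y ∉ Y) (l : ℕ) :
    (mt X (insert y Y) (l+1)).card = (mt X Y (l+1)).card + ∑ x ∈ X, (mt (X.erase x) Y l).card := by
  have key : mt X (insert y Y) (l+1) = mt X Y (l+1) ∪
      X.biUnion (fun x => (mt (X.erase x) Y l).image (fun s => insert (x, y) s)) := by
    ext s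
    simp only [Finset.mem_union, Finset.mem_biUnion, Finset.mem_image]
    constructor
    · intro hs
      rw [mem_mt] at hs
      obtain ⟨h1, h2, h3, h4⟩ := hs
      by_cases h : ∃ x, (x, y) ∈ s
      · right
        obtain ⟨x, hx⟩ := h
        refine ⟨x, (h1 _ hx).1, s.erase (x, y), ?_, Finset.insert_erase hx⟩
        rw [mem_mt]
        refine ⟨?_, ?_, ?_, ?_⟩
        · intro p hp
          rw [Finset.mem_erase] at hp
          have := h1 p hp.2
          refine ⟨Finset.mem_erase.mpr ⟨fun h => hp.1 (h2 p hp.2 _ hx h), this.1⟩, ?_⟩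
          rcases Finset.mem_insert.mp this.2 with h | h
          · exact absurd (h3 p hp.2 _ hx h) hp.1
          · exact h
        · intro p hp q hq
          exact h2 p (Finset.mem_of_mem_erase hp) q (Finset.mem_of_mem_erase hq)
        · intro p hp q hq
          exact h3 p (Finset.mem_of_mem_erase hp) q (Finset.mem_of_mem_erase hq)
        · rw [Finset.card_erase_of_mem hx, h4]; rfl
      · left
        rw [mem_mt]
        refine ⟨fun p hp => ⟨(h1 p hp).1, ?_⟩, h2, h3, h4⟩
        rcases Finset.mem_insert.mp (h1 p hp).2 with h' | h'
        · exact absurd ⟨p.1, by rw [← h']; exact hp⟩ h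
        · exact h'
    · rintro (hs | ⟨x, hx, s, hs, rfl⟩)
      · rw [mem_mt] at hs ⊢
        exact ⟨fun p hp => ⟨(hs.1 p hp).1, Finset.mem_insert_of_mem (hs.1 p hp).2⟩, hs.2⟩
      · rw [mem_mt] at hs ⊢
        obtain ⟨h1, h2, h3, h4⟩ := hs
        refine ⟨?_, ?_, ?_, ?_⟩
        · grind
        · grind
        · grind
        · rw [Finset.card_insert_of_notMem, h4]
          intro h
          exact hy (h1 _ h).2
  rw [key, Finset.card_union_of_disjoint, Finset.card_biUnion]
  · congr 1
    apply Finset.sum_congr rfl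
    intro x hx
    apply Finset.card_image_of_injOn
    intro s hs t ht hst
    have hs := mem_mt.mp hs
    have ht := mem_mt.mp ht
    have a : (x, y) ∉ s := fun h => hy (hs.1 _ h).2
    have b : (x, y) ∉ t := fun h => hy (ht.1 _ h).2
    simp only at hst
    rw [← Finset.erase_insert a, hst, Finset.erase_insert b]
  · intro x hx x' hx' hne
    simp only [Function.onFun]
    rw [Finset.disjoint_left]
    intro s h1 h2
    rw [Finset.mem_image] at h1 h2
    obtain ⟨s1, hs1, rfl⟩ := h1
    obtain ⟨s2, hs2, h⟩ := h2
    have : (x, y) ∈ insert (x', y) s2 := by rw [h]; simp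
    rw [Finset.mem_insert] at this
    rcases this with h | h
    · exact hne (by simpa using h)
    · exact hy ((mem_mt.mp hs2).1 _ h).2
  · rw [Finset.disjoint_left]
    intro s h1 h2
    simp only [Finset.mem_biUnion, Finset.mem_image] at h2
    obtain ⟨x, hx, t, ht, rfl⟩ := h2
    exact hy ((mem_mt.mp h1).1 (x, y) (by simp)).2

theorem card_mt (Y : Finset ℕ) : ∀ (X : Finset ℕ) (l : ℕ),
    (mt X Y l).card = Y.card.choose l * X.card.descFactorial l := by
  induction Y using Finset.induction_on with
  | empty =>
    intro X l
    cases l with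
    | zero => simp [mt_zero]
    | succ l => simp [mt_empty]
  | insert y Y hy ih =>
    intro X l
    cases l with
    | zero => simp [mt_zero]
    | succ l =>
      rw [mt_succ X Y y hy, ih, Finset.card_insert_of_notMem hy, Nat.choose_succ_succ]
      have : ∑ x ∈ X, (mt (X.erase x) Y l).card
          = ∑ x ∈ X, Y.card.choose l * (X.card - 1).descFactorial l := by
        apply Finset.sum_congr rfl
        intro x hx
        rw [ih, Finset.card_erase_of_mem hx]
      rw [this, Finset.sum_const, smul_eq_mul]
      rcases hX : X.card with _ | n
      · simp
      · rw [Nat.succ_descFactorial_succ]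
        simp only [Nat.add_sub_cancel]
        ring

theorem fin_S (p q : ℕ) : {G : BD | G.Valid ∧ G.omega = p ∧ G.hfUp = q}.Finite := by
  have h1 : (Set.range (fun c : Composition p => c.blocks)).Finite := Set.finite_range _
  have h2 : (((Finset.Icc 1 p).powerset : Finset (Finset ℕ)) : Set (Finset ℕ)).Finite :=
    Finset.finite_toSet _
  have h3 : (((Finset.Icc 1 p ×ˢ Finset.Icc 1 p).powerset : Finset (Finset (ℕ × ℕ))) :
    Set (Finset (ℕ × ℕ))).Finite := Finset.finite_toSet _
  have := ((h1.prod (h2.prod (h2.prod h3))).image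
    (fun t : List ℕ × Finset ℕ × Finset ℕ × Finset (ℕ × ℕ) => BD.mk t.1 t.2.1 t.2.2.1 t.2.2.2))
  refine this.subset ?_
  rintro ⟨L, U, D, E⟩ ⟨⟨ha, hb, hc, hd, _, _⟩, ho, _⟩
  rw [ho] at hb hc
  refine ⟨(L, U, D, E), ⟨⟨⟨L, fun {i} hi => ha i hi, ho⟩, rfl⟩, ?_, ?_, ?_⟩, rfl⟩
  · exact Finset.mem_coe.mpr (Finset.mem_powerset.mpr hb)
  · exact Finset.mem_coe.mpr (Finset.mem_powerset.mpr hc)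
  · simp only [Finset.coe_powerset, Set.mem_preimage, Set.mem_powerset_iff, Finset.coe_subset]
    intro e he
    rw [Finset.mem_product]
    exact ⟨hb (hd e he).1, hc (hd e he).2.1⟩

noncomputable def S (p q : ℕ) : Finset BD := (fin_S p q).toFinset

theorem mem_S {p q : ℕ} {G : BD} : G ∈ S p q ↔ G.Valid ∧ G.omega = p ∧ G.hfUp = q := by
  simp [S]

theorem dBD_eq (p q : ℕ) : dBD p q = (S p q).card := by
  unfold dBD S
  rw [Set.ncard_eq_toFinset_card _ (fin_S p q)]

/-- vertex function on lists -/
def vl (L : List ℕ) (k : ℕ) : ℕ := (List.range L.length).countP (fun i => (L.take i).sum < k)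

theorem v_eq (G : BD) (k : ℕ) : G.v k = vl G.lam k := rfl

theorem vl_le (L : List ℕ) (k : ℕ) : vl L k ≤ L.length := by
  unfold vl
  exact List.countP_le_length.trans (by simp)

theorem take_sum_le (L : List ℕ) (i : ℕ) : (L.take i).sum ≤ L.sum := by
  conv_rhs => rw [← List.take_append_drop i L, List.sum_append]
  omega

theorem vl_gt (L : List ℕ) (k : ℕ) (h : L.sum < k) : vl L k = L.length := by
  unfold vl
  conv_rhs => rw [← List.length_range (n := L.length)]
  rw [List.countP_eq_length]
  intro i _
  have := take_sum_le L i
  simp; omega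

theorem vl_snoc (L : List ℕ) (i k : ℕ) :
    vl (L ++ [i]) k = vl L k + if L.sum < k then 1 else 0 := by
  unfold vl
  rw [List.length_append, List.length_singleton, List.range_succ, List.countP_append]
  congr 1
  · apply List.countP_congr
    intro x hx
    rw [List.mem_range] at hx
    rw [List.take_append_of_le_length hx.le]
  · simp [List.countP_cons]

def ext (G : BD) (i : ℕ) (A B : Finset ℕ) (M : Finset (ℕ × ℕ)) : BD :=
  ⟨G.lam ++ [i], G.up ∪ A, G.dn ∪ B, G.ed ∪ M⟩

def res (G : BD) (m : ℕ) : BD :=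
  ⟨G.lam.dropLast, G.up.filter (· ≤ m), G.dn.filter (· ≤ m), G.ed.filter (fun e => e.2 ≤ m)⟩

def cu (G : BD) (m : ℕ) : Finset ℕ := G.up.filter (m < ·)
def cd (G : BD) (m : ℕ) : Finset ℕ := G.dn.filter (m < ·)
def ce (G : BD) (m : ℕ) : Finset (ℕ × ℕ) := G.ed.filter (fun e => m < e.2)

structure Cond (G : BD) (i : ℕ) (A B : Finset ℕ) (M : Finset (ℕ × ℕ)) : Prop where
  val : G.Valid
  pos : 0 < i
  hA : ∀ x ∈ A, G.omega < x ∧ x ≤ G.omega + i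
  hB : ∀ x ∈ B, G.omega < x ∧ x ≤ G.omega + i
  hM : ∀ e ∈ M, e.1 ∈ G.HfUp ∧ e.2 ∈ B
  h1 : ∀ p ∈ M, ∀ q ∈ M, p.1 = q.1 → p = q
  h2 : ∀ p ∈ M, ∀ q ∈ M, p.2 = q.2 → p = q

theorem omega_ext (G : BD) (i A B M) : (ext G i A B M).omega = G.omega + i := by
  simp [ext, BD.omega]

theorem mem_HfUp (G : BD) (x : ℕ) : x ∈ G.HfUp ↔ x ∈ G.up ∧ ∀ e ∈ G.ed, e.1 ≠ x := by
  simp only [BD.HfUp, Finset.mem_sdiff, Finset.mem_image, not_exists, not_and, ne_eq]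

theorem ext_valid {G : BD} {i A B M} (h : Cond G i A B M) : (ext G i A B M).Valid := by
  obtain ⟨⟨v1, v2, v3, v4, v5, v6⟩, hi, hA, hB, hM, h1, h2⟩ := h
  simp only [mem_HfUp] at hM
  have hu : ∀ x ∈ G.up, 1 ≤ x ∧ x ≤ G.omega := fun x hx => Finset.mem_Icc.mp (v2 hx)
  have hd : ∀ x ∈ G.dn, 1 ≤ x ∧ x ≤ G.omega := fun x hx => Finset.mem_Icc.mp (v3 hx)
  refine ⟨?_, ?_, ?_, ?_, ?_, ?_⟩
  · intro x hx
    simp only [ext, List.mem_append, List.mem_singleton] at hx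
    rcases hx with hx | rfl
    · exact v1 x hx
    · exact hi
  · rw [omega_ext]
    intro x hx
    simp only [ext, Finset.mem_union] at hx
    rw [Finset.mem_Icc]
    rcases hx with hx | hx
    · have := hu x hx; omega
    · have := hA x hx; omega
  · rw [omega_ext]
    intro x hx
    simp only [ext, Finset.mem_union] at hx
    rw [Finset.mem_Icc]
    rcases hx with hx | hx
    · have := hd x hx; omega
    · have := hB x hx; omega
  · intro e he
    simp only [v_eq]
    simp only [ext, Finset.mem_union, vl_snoc] at he ⊢
    rcases he with he | he
    · obtain ⟨a, b, c⟩ := v4 e he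
      refine ⟨Or.inl a, Or.inl b, ?_⟩
      have := hu _ a
      have := hd _ b
      simp only [v_eq] at c
      simp only [BD.omega] at *
      rw [if_neg (by omega), if_neg (by omega)]
      exact c
    · obtain ⟨⟨a, _⟩, b⟩ := hM e he
      refine ⟨Or.inl a, Or.inr b, ?_⟩
      have := hu _ a
      have := hB _ b
      simp only [BD.omega] at *
      rw [if_neg (by omega), if_pos (by omega), vl_gt _ e.2 (by omega)]
      have := vl_le G.lam e.1
      omega
  · intro p hp q hq hpq
    simp only [ext, Finset.mem_union] at hp hq
    rcases hp with hp | hp <;> rcases hq with hq | hq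
    · exact v5 p hp q hq hpq
    · exact absurd hpq ((hM q hq).1.2 p hp)
    · exact absurd hpq.symm ((hM p hp).1.2 q hq)
    · exact h1 p hp q hq hpq
  · intro p hp q hq hpq
    simp only [ext, Finset.mem_union] at hp hq
    rcases hp with hp | hp <;> rcases hq with hq | hq
    · exact v6 p hp q hq hpq
    · have := hd _ (v4 p hp).2.1
      have := hB _ (hM q hq).2
      omega
    · have := hd _ (v4 q hq).2.1
      have := hB _ (hM p hp).2
      omega
    · exact h2 p hp q hq hpq

theorem ext_hf {G : BD} {i A B M} (h : Cond G i A B M) :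
    (ext G i A B M).hfUp + M.card = G.hfUp + A.card := by
  obtain ⟨⟨v1, v2, v3, v4, v5, v6⟩, hi, hA, hB, hM, h1, h2⟩ := h
  have hu : ∀ x ∈ G.up, 1 ≤ x ∧ x ≤ G.omega := fun x hx => Finset.mem_Icc.mp (v2 hx)
  have e1 : (ext G i A B M).HfUp = (G.HfUp \ M.image Prod.fst) ∪ A := by
    ext x
    simp only [Finset.mem_union, Finset.mem_sdiff, mem_HfUp, Finset.mem_image, ext]
    simp only [mem_HfUp] at hM
    constructor
    · rintro ⟨hx | hx, he⟩
      · left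
        refine ⟨⟨hx, fun e h => he e (Or.inl h)⟩, ?_⟩
        rintro ⟨e, h, h'⟩
        exact he e (Or.inr h) h'
      · exact Or.inr hx
    · rintro (⟨⟨hx, he⟩, hn⟩ | hx)
      · refine ⟨Or.inl hx, ?_⟩
        rintro e (h | h)
        · exact he e h
        · exact fun h' => hn ⟨e, h, h'⟩
      · refine ⟨Or.inr hx, ?_⟩
        have := hA x hx
        rintro e (h | h) rfl
        · have := hu _ (v4 e h).1
          omega
        · have := hu _ (hM e h).1.1
          omega
  have hs : M.image Prod.fst ⊆ G.HfUp := by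
    intro x hx
    obtain ⟨e, he, rfl⟩ := Finset.mem_image.mp hx
    exact (hM e he).1
  have hc : (M.image Prod.fst).card = M.card := Finset.card_image_of_injOn
    (fun p hp q hq hpq => h1 p hp q hq hpq)
  have hdj : Disjoint (G.HfUp \ M.image Prod.fst) A := by
    rw [Finset.disjoint_left]
    intro x hx hx'
    have := hu x ((mem_HfUp _ _).mp (Finset.mem_sdiff.mp hx).1).1
    have := hA x hx'
    omega
  unfold BD.hfUp
  rw [e1, Finset.card_union_of_disjoint hdj, ← hc]
  have := Finset.card_sdiff_add_card_eq_card hs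
  omega

theorem res_ext {G : BD} {i A B M} (h : Cond G i A B M) :
    res (ext G i A B M) G.omega = G ∧ cu (ext G i A B M) G.omega = A ∧
    cd (ext G i A B M) G.omega = B ∧ ce (ext G i A B M) G.omega = M := by
  obtain ⟨⟨v1, v2, v3, v4, v5, v6⟩, hi, hA, hB, hM, h1, h2⟩ := h
  have hu : ∀ x ∈ G.up, 1 ≤ x ∧ x ≤ G.omega := fun x hx => Finset.mem_Icc.mp (v2 hx)
  have hd : ∀ x ∈ G.dn, 1 ≤ x ∧ x ≤ G.omega := fun x hx => Finset.mem_Icc.mp (v3 hx)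
  have he : ∀ e ∈ G.ed, e.2 ≤ G.omega := fun e he => (hd _ (v4 e he).2.1).2
  have hM' : ∀ e ∈ M, G.omega < e.2 := fun e he => (hB _ (hM e he).2).1
  refine ⟨?_, ?_, ?_, ?_⟩
  · generalize G.omega = m at *
    obtain ⟨L, U, D, E⟩ := G
    simp only [res, ext, List.dropLast_concat, BD.mk.injEq, true_and] at *
    refine ⟨?_, ?_, ?_⟩
    · ext x
      have := hu x
      have := hA x
      simp only [Finset.mem_filter, Finset.mem_union]
      grind
    · ext x
      have := hd x
      have := hB x
      simp only [Finset.mem_filter, Finset.mem_union]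
      grind
    · ext x
      have := he x
      have := hM' x
      simp only [Finset.mem_filter, Finset.mem_union]
      grind
  · ext x
    have := hu x
    have := hA x
    simp only [cu, ext, Finset.mem_filter, Finset.mem_union]
    grind
  · ext x
    have := hd x
    have := hB x
    simp only [cd, ext, Finset.mem_filter, Finset.mem_union]
    grind
  · ext x
    have := he x
    have := hM' x
    simp only [ce, ext, Finset.mem_filter, Finset.mem_union]
    grind

theorem ext_res {G : BD} {L : List ℕ} {i : ℕ} (hl : G.lam = L ++ [i]) (m : ℕ) :
    ext (res G m) i (cu G m) (cd G m) (ce G m) = G := by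
  obtain ⟨L', U, D, E⟩ := G
  simp only at hl
  subst hl
  simp only [res, ext, cu, cd, ce, List.dropLast_concat, BD.mk.injEq, true_and]
  refine ⟨?_, ?_, ?_⟩ <;>
  · ext x
    simp only [Finset.mem_filter, Finset.mem_union]
    grind

theorem cond_res {G : BD} {L : List ℕ} {i : ℕ} (hl : G.lam = L ++ [i]) (hv : G.Valid) :
    (res G L.sum).omega = L.sum ∧
    Cond (res G L.sum) i (cu G L.sum) (cd G L.sum) (ce G L.sum) := by
  obtain ⟨v1, v2, v3, v4, v5, v6⟩ := hv
  have ho : (res G L.sum).omega = L.sum := by simp [res, BD.omega, hl]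
  have ho' : G.omega = L.sum + i := by simp [BD.omega, hl]
  rw [ho'] at v2 v3
  have hu : ∀ x ∈ G.up, 1 ≤ x ∧ x ≤ L.sum + i := fun x hx => Finset.mem_Icc.mp (v2 hx)
  have hd : ∀ x ∈ G.dn, 1 ≤ x ∧ x ≤ L.sum + i := fun x hx => Finset.mem_Icc.mp (v3 hx)
  have hve : ∀ e ∈ G.ed, vl (L ++ [i]) e.1 < vl (L ++ [i]) e.2 := by
    intro e he
    rw [← hl]; exact (v4 e he).2.2
  simp only [vl_snoc] at hve
  have h1 : ∀ e ∈ G.ed, e.1 ≤ L.sum := by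
    intro e he
    by_contra hc
    have := hve e he
    rw [vl_gt L e.1 (by omega), if_pos (by omega)] at this
    have := vl_le L e.2
    split_ifs at * <;> omega
  refine ⟨ho, ⟨?_, ?_, ?_, ?_, ?_, ?_⟩, ?_, ?_, ?_, ?_, ?_, ?_⟩
  · intro x hx
    apply v1
    simp only [res, hl, List.dropLast_concat] at hx
    rw [hl]; simp [hx]
  · rw [ho]
    intro x hx
    simp only [res, Finset.mem_filter] at hx
    exact Finset.mem_Icc.mpr ⟨(hu x hx.1).1, hx.2⟩
  · rw [ho]
    intro x hx
    simp only [res, Finset.mem_filter] at hx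
    exact Finset.mem_Icc.mpr ⟨(hd x hx.1).1, hx.2⟩
  · intro e he
    simp only [v_eq]
    simp only [res, Finset.mem_filter, hl, List.dropLast_concat] at he ⊢
    have := v4 e he.1
    have h1 := h1 e he.1
    refine ⟨⟨this.1, h1⟩, ⟨this.2.1, he.2⟩, ?_⟩
    have := hve e he.1
    rwa [if_neg (by omega), if_neg (by omega)] at this
  · intro p hp q hq
    exact v5 p (Finset.mem_filter.mp hp).1 q (Finset.mem_filter.mp hq).1
  · intro p hp q hq
    exact v6 p (Finset.mem_filter.mp hp).1 q (Finset.mem_filter.mp hq).1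
  · exact v1 i (by rw [hl]; simp)
  · intro x hx
    rw [ho]
    have hx := Finset.mem_filter.mp hx
    exact ⟨hx.2, (hu x hx.1).2⟩
  · intro x hx
    rw [ho]
    have hx := Finset.mem_filter.mp hx
    exact ⟨hx.2, (hd x hx.1).2⟩
  · intro e he
    have he := Finset.mem_filter.mp he
    rw [mem_HfUp]
    refine ⟨⟨Finset.mem_filter.mpr ⟨(v4 e he.1).1, h1 e he.1⟩, ?_⟩,
      Finset.mem_filter.mpr ⟨(v4 e he.1).2.1, he.2⟩⟩
    intro f hf hfe
    have hf := Finset.mem_filter.mp hf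
    have := v5 f hf.1 e he.1 hfe
    subst this
    omega
  · intro p hp q hq
    exact v5 p (Finset.mem_filter.mp hp).1 q (Finset.mem_filter.mp hq).1
  · intro p hp q hq
    exact v6 p (Finset.mem_filter.mp hp).1 q (Finset.mem_filter.mp hq).1

def lst (G : BD) : ℕ := G.lam.getLastD 0

theorem lst_ext (G : BD) (i A B M) : lst (ext G i A B M) = i := by
  simp [lst, ext]

/-- structure of diagrams of positive size -/
theorem S_decomp {p q : ℕ} (hp : 1 ≤ p) {G : BD} (hG : G ∈ S p q) :
    lst G ≤ p ∧ (res G (p - lst G)).omega = p - lst G ∧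
    ext (res G (p - lst G)) (lst G) (cu G (p - lst G)) (cd G (p - lst G)) (ce G (p - lst G)) = G ∧
    Cond (res G (p - lst G)) (lst G) (cu G (p - lst G)) (cd G (p - lst G)) (ce G (p - lst G)) := by
  obtain ⟨hv, ho, _⟩ := mem_S.mp hG
  have hne : G.lam ≠ [] := by
    intro h
    simp [BD.omega, h] at ho
    omega
  obtain ⟨L, i, hl⟩ : ∃ L i, G.lam = L ++ [i] :=
    ⟨_, _, (List.dropLast_append_getLast hne).symm⟩
  have hi : lst G = i := by simp [lst, hl]
  have hs : L.sum + i = p := by rw [← ho]; simp [BD.omega, hl]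
  have hs' : p - lst G = L.sum := by omega
  rw [hs', hi]
  have := cond_res hl hv
  exact ⟨by omega, this.1, ext_res hl _, this.2⟩

def IJ (p i : ℕ) : Finset ℕ := Finset.Ioc (p - i) p

theorem fiber {p q i j k l : ℕ} (hi : 1 ≤ i) (hip : i ≤ p) :
    (((((S p q).filter (fun G => lst G = i)).filter (fun G => (cd G (p - lst G)).card = j)).filter
      (fun G => (cu G (p - lst G)).card = k)).filter (fun G => (ce G (p - lst G)).card = l)).card =
    if k ≤ q + l then
      Nat.factorial l * Nat.choose j l * Nat.choose (q + l - k) l *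
        Nat.choose i j * Nat.choose i k * dBD (p - i) (q + l - k)
    else 0 := by
  have hp : 1 ≤ p := by omega
  split_ifs with hk
  · set T := (S (p - i) (q + l - k) ×ˢ (powersetCard k (IJ p i)) ×ˢ (powersetCard j (IJ p i))).sigma
      (fun t => mt t.1.HfUp t.2.2 l) with hT
    have hTc : T.card = Nat.factorial l * Nat.choose j l * Nat.choose (q + l - k) l *
        Nat.choose i j * Nat.choose i k * dBD (p - i) (q + l - k) := by
      rw [hT, Finset.card_sigma, Finset.sum_const_nat (m := j.choose l * (q + l - k).descFactorial l)]
      · rw [Finset.card_product, Finset.card_product, Finset.card_powersetCard,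
          Finset.card_powersetCard, ← dBD_eq, Nat.descFactorial_eq_factorial_mul_choose]
        have : (IJ p i).card = i := by simp [IJ]; omega
        rw [this]
        ring
      · rintro ⟨G, A, B⟩ h
        simp only [Finset.mem_product, mem_S, Finset.mem_powersetCard] at h
        rw [card_mt]
        have h1 : G.HfUp.card = q + l - k := h.1.2.2
        rw [h1, h.2.2.2]
    rw [← hTc]
    have hcond : ∀ t ∈ T, t.1.1.omega = p - i ∧ Cond t.1.1 i t.1.2.1 t.1.2.2 t.2 := by
      rintro ⟨⟨G, A, B⟩, M⟩ ht
      simp only [hT, Finset.mem_sigma, Finset.mem_product, mem_S, Finset.mem_powersetCard, mem_mt,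
        IJ, Finset.subset_iff, Finset.mem_Ioc] at ht
      obtain ⟨⟨⟨a1, a2, a3⟩, ⟨b1, b2⟩, ⟨c1, c2⟩⟩, d1, d2, d3, d4⟩ := ht
      refine ⟨a2, a1, hi, ?_, ?_, d1, d2, d3⟩
      · intro x hx; have := b1 hx; simp only; omega
      · intro x hx; have := c1 hx; simp only; omega
    symm
    apply Finset.card_nbij' (fun t => ext t.1.1 i t.1.2.1 t.1.2.2 t.2)
      (fun G => ⟨(res G (p - i), cu G (p - i), cd G (p - i)), ce G (p - i)⟩)
    · rintro t ht
      obtain ⟨ho, hc⟩ := hcond t ht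
      obtain ⟨r1, r2, r3, r4⟩ := res_ext hc
      have hf := ext_hf hc
      obtain ⟨⟨G, A, B⟩, M⟩ := t
      simp only [hT, Finset.mem_coe, Finset.mem_sigma, Finset.mem_product, mem_S,
        Finset.mem_powersetCard, mem_mt] at ht
      obtain ⟨⟨⟨a1, a2, a3⟩, ⟨b1, b2⟩, ⟨c1, c2⟩⟩, d1, d2, d3, d4⟩ := ht
      simp only [a2] at r1 r2 r3 r4
      simp only [Finset.mem_coe, Finset.mem_filter, lst_ext, r2, r3, r4, mem_S, omega_ext]
      refine ⟨⟨⟨⟨⟨ext_valid hc, by omega, ?_⟩, trivial⟩, c2⟩, b2⟩, d4⟩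
      simp only at hf
      omega
    · intro G hG
      simp only [Finset.mem_coe, Finset.mem_filter] at hG
      obtain ⟨⟨⟨⟨hS, hl⟩, hj⟩, hk'⟩, hl'⟩ := hG
      obtain ⟨_, ho, he, hc⟩ := S_decomp hp hS
      rw [hl] at hj hk' hl' ho he hc
      have hf := ext_hf hc
      rw [he] at hf
      obtain ⟨hv, hom, hfu⟩ := mem_S.mp hS
      obtain ⟨c1, c2, c3, c4, c5, c6, c7⟩ := hc
      rw [ho] at c3 c4
      simp only [hT, Finset.mem_coe, Finset.mem_sigma, Finset.mem_product, mem_S,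
        Finset.mem_powersetCard, mem_mt, IJ, Finset.subset_iff, Finset.mem_Ioc]
      refine ⟨⟨⟨c1, ho, by omega⟩, ⟨?_, hk'⟩, ⟨?_, hj⟩⟩, c5, c6, c7, hl'⟩
      · intro x hx; have := c3 x hx; omega
      · intro x hx; have := c4 x hx; omega
    · intro t ht
      obtain ⟨ho, hc⟩ := hcond t ht
      obtain ⟨r1, r2, r3, r4⟩ := res_ext hc
      obtain ⟨⟨G, A, B⟩, M⟩ := t
      simp only at ho
      simp only [ho] at r1 r2 r3 r4
      simp only [r1, r2, r3, r4]
    · intro G hG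
      simp only [Finset.mem_coe, Finset.mem_filter] at hG
      obtain ⟨⟨⟨⟨hS, hl⟩, hj⟩, hk'⟩, hl'⟩ := hG
      obtain ⟨_, ho, he, hc⟩ := S_decomp hp hS
      rw [hl] at he
      exact he
  · rw [Finset.card_eq_zero, Finset.eq_empty_iff_forall_notMem]
    intro G hG
    simp only [Finset.mem_filter] at hG
    obtain ⟨⟨⟨⟨hS, hl⟩, hj⟩, hk'⟩, hl'⟩ := hG
    obtain ⟨_, ho, he, hc⟩ := S_decomp hp hS
    have hf := ext_hf hc
    rw [he, (mem_S.mp hS).2.2] at hf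
    omega

theorem card_Ioc_sub {A : Finset ℕ} {m i : ℕ} (h : ∀ x ∈ A, m < x ∧ x ≤ m + i) : A.card ≤ i := by
  have : A ⊆ Finset.Ioc m (m + i) := fun x hx => Finset.mem_Ioc.mpr (h x hx)
  simpa using Finset.card_le_card this

theorem recur (p q : ℕ) (hp : 1 ≤ p) : dBD p q =
        ∑ i ∈ Finset.Icc 1 p, ∑ j ∈ Finset.range (i + 1), ∑ k ∈ Finset.range (i + 1),
          ∑ l ∈ Finset.range (j + 1),
            if k ≤ q + l then
              Nat.factorial l * Nat.choose j l * Nat.choose (q + l - k) l *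
                Nat.choose i j * Nat.choose i k * dBD (p - i) (q + l - k)
            else 0 := by
  rw [dBD_eq p q]
  rw [Finset.card_eq_sum_card_fiberwise (f := lst) (t := Finset.Icc 1 p)]
  swap
  · intro G hG
    obtain ⟨h1, ho, he, hc⟩ := S_decomp hp hG
    simp only [Finset.coe_Icc, Set.mem_Icc]
    exact ⟨hc.pos, h1⟩
  apply Finset.sum_congr rfl
  intro i hi
  rw [Finset.mem_Icc] at hi
  rw [Finset.card_eq_sum_card_fiberwise (f := fun G => (cd G (p - lst G)).card)
    (t := Finset.range (i + 1))]
  swap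
  · intro G hG
    simp only [Finset.mem_coe, Finset.mem_filter] at hG
    obtain ⟨h1, ho, he, hc⟩ := S_decomp hp hG.1
    have := card_Ioc_sub hc.hB
    simp only [Finset.coe_range, Set.mem_Iio]
    omega
  apply Finset.sum_congr rfl
  intro j hj
  rw [Finset.card_eq_sum_card_fiberwise (f := fun G => (cu G (p - lst G)).card)
    (t := Finset.range (i + 1))]
  swap
  · intro G hG
    simp only [Finset.mem_coe, Finset.mem_filter] at hG
    obtain ⟨h1, ho, he, hc⟩ := S_decomp hp hG.1.1
    have := card_Ioc_sub hc.hA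
    simp only [Finset.coe_range, Set.mem_Iio]
    omega
  apply Finset.sum_congr rfl
  intro k hk
  rw [Finset.card_eq_sum_card_fiberwise (f := fun G => (ce G (p - lst G)).card)
    (t := Finset.range (j + 1))]
  swap
  · intro G hG
    simp only [Finset.mem_coe, Finset.mem_filter] at hG
    obtain ⟨h1, ho, he, hc⟩ := S_decomp hp hG.1.1.1
    have : (ce G (p - lst G)).card ≤ (cd G (p - lst G)).card :=
      Finset.card_le_card_of_injOn Prod.snd (fun e he => (hc.hM e he).2)
        (fun e he f hf h => hc.h2 e he f hf h)
    simp only [Finset.coe_range, Set.mem_Iio]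
    omega
  apply Finset.sum_congr rfl
  intro l hl
  exact fiber hi.1 hi.2

theorem eq_eps {G : BD} (hv : G.Valid) (ho : G.omega = 0) : G = BD.eps := by
  obtain ⟨v1, v2, v3, v4, v5, v6⟩ := hv
  rw [ho] at v2 v3
  obtain ⟨L, U, D, E⟩ := G
  simp only [Finset.Icc_eq_empty_of_lt Nat.zero_lt_one, Finset.subset_empty] at v2 v3
  subst v2 v3
  have hE : E = ∅ := by
    rw [Finset.eq_empty_iff_forall_notMem]
    intro e he
    exact absurd (v4 e he).1 (by simp)
  have hL : L = [] := by
    cases L with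
    | nil => rfl
    | cons a L =>
      have := v1 a (by simp)
      simp [BD.omega] at ho
      omega
  subst hE hL
  rfl

theorem zero_zero : dBD 0 0 = 1 := by
  have : S 0 0 = {BD.eps} := by
    ext G
    rw [mem_S, Finset.mem_singleton]
    constructor
    · rintro ⟨a, b, _⟩
      exact eq_eps a b
    · rintro rfl
      exact ⟨BD.eps_valid, rfl, rfl⟩
  rw [dBD_eq, this]; rfl

theorem zero_pos (q : ℕ) (hq : 0 < q) : dBD 0 q = 0 := by
  rw [dBD_eq, Finset.card_eq_zero, Finset.eq_empty_iff_forall_notMem]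
  intro G hG
  obtain ⟨a, b, c⟩ := mem_S.mp hG
  rw [eq_eps a b] at c
  have : BD.eps.hfUp = 0 := rfl
  omega

end BDAux

/-- the sets counted by `d_{p,q}` are finite, `d_{0,0} = 1`,
`d_{0,q} = 0` for `q > 0`, and the `d_{p,q}` satisfy the recursion
`d_{p,q} = Σ_{i=1}^{p} Σ_{j=0}^{i} Σ_{k=0}^{i} Σ_{ℓ=0}^{j}
   ℓ!·C(j,ℓ)·C(q−k+ℓ,ℓ)·C(i,j)·C(i,k)·d_{p−i,q−k+ℓ}`,
the terms with `k > q + ℓ` being understood to vanish. -/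
theorem dBD_recursion :
    (∀ p q : ℕ, {G : BD | G.Valid ∧ G.omega = p ∧ G.hfUp = q}.Finite) ∧
    dBD 0 0 = 1 ∧ (∀ q : ℕ, 0 < q → dBD 0 q = 0) ∧
    (∀ p q : ℕ, 1 ≤ p →
      dBD p q =
        ∑ i ∈ Finset.Icc 1 p, ∑ j ∈ Finset.range (i + 1), ∑ k ∈ Finset.range (i + 1),
          ∑ l ∈ Finset.range (j + 1),
            if k ≤ q + l then
              Nat.factorial l * Nat.choose j l * Nat.choose (q + l - k) l *
                Nat.choose i j * Nat.choose i k * dBD (p - i) (q + l - k)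
            else 0) := by
  exact ⟨BDAux.fin_S, BDAux.zero_zero, BDAux.zero_pos, BDAux.recur⟩
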